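/- arXiv:1408.4093 — 2 statements merged into one kernel-verified Lean document; each statement's English description precedes it below -/
import Mathlib

section
/- (Klazar–Marcus) For every d ≥ 1 and every permutation d-matrix A of size k^d, there exists a constant C such that for every n, every A-free d-matrix of size n×⋯×n has at most C·n^{d−1} one-entries; that is, ex_d(n,A) = O(n^{d−1}). -/
/-!
The proof follows Marcus–Tardos and Klazar–Marcus. Cut the grid of side `N * s` in dimension `d`
into blocks of side `s`. The nonempty blocks of a pattern-free set form a pattern-free subset of
the grid of side `N`, since a strict inequality between block coordinates lifts to the points in
the blocks. Call a block wide in direction `j` if its points have at least `k` distinct `j`-th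
coordinates. Among the wide blocks with the same `j`-th index and the same residues mod `s` in
direction `j`, the pattern with direction `j` deleted does not occur, since the common residues
would lift it to the full pattern; this bounds the number of wide blocks by the extremal number in
dimension `d - 1`. A block that is wide in no direction has at most `k ^ d` points. Altogether

  `ex_d(N * s) ≤ k ^ d * ex_d(N) + s ^ d * (number of wide blocks)`.

For `d = 1` the second summand vanishes, so `N = 1` and `s = n` give the bound. For `d ≥ 2` the
second summand is `O(N ^ (d - 1))` by induction, and with `s = (k + 2) ^ 2` the factor `k ^ d` is
smaller than `s ^ (d - 1)`, so the recursion yields `ex_d(n) = O(n ^ (d - 1))`.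
-/

/-- Number of 1-entries of a 0-1 hypermatrix. -/
def ones {ι : Type*} [Fintype ι] [DecidableEq ι] {nn : ι → ℕ}
    (M : (∀ j, Fin (nn j)) → Bool) : ℕ :=
  (Finset.univ.filter fun i => M i = true).card

/-- The hypermatrix `M` contains the hypermatrix `A`: there are strictly increasing
maps, one for each coordinate, sending 1-entries of `A` to 1-entries of `M`. -/
def MatContains {ι : Type*} {kk nn : ι → ℕ}
    (M : (∀ j, Fin (nn j)) → Bool) (A : (∀ j, Fin (kk j)) → Bool) : Prop :=
  ∃ f : ∀ j, Fin (kk j) → Fin (nn j), (∀ j, StrictMono (f j)) ∧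
    ∀ i, A i = true → M (fun j => f j (i j)) = true

/-- A permutation d-matrix of size k^d: exactly `k` ones, and for each coordinate
direction `j` and each value `v` there is exactly one 1-entry with j-th coordinate `v`. -/
def IsPermMatrix {d k : ℕ} (A : (Fin d → Fin k) → Bool) : Prop :=
  (Finset.univ.filter fun i => A i = true).card = k ∧
    ∀ (j : Fin d) (v : Fin k), ∃! i : Fin d → Fin k, A i = true ∧ i j = v

open Finset

section ForbiddenPatterns

variable {ι τ : Type*} {k n N s : ℕ} {σ : ι → τ → Fin k} {S : Finset (ι → ℕ)}

/-- The set `S` contains the pattern of points `(σ j t)_j`, where `t` ranges over `τ`: there are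
points `p t` of `S` which in every direction `j` are ordered like the values `σ j t`. Nothing is
required of `p t j` and `p u j` when `σ j t = σ j u`. -/
def ContainsPattern (σ : ι → τ → Fin k) (S : Finset (ι → ℕ)) : Prop :=
  ∃ p : τ → ι → ℕ, (∀ t, p t ∈ S) ∧ ∀ j t u, σ j t < σ j u → p t j < p u j

section Blocks

variable [Fintype ι]

/-- The index of the block of side `s` containing the point `x`. -/
def blockIndex (s : ℕ) (x : ι → ℕ) : ι → ℕ := fun j => x j / s

/-- The points of `S` lying in the block of side `s` with index `b`. -/
def block (s : ℕ) (S : Finset (ι → ℕ)) (b : ι → ℕ) : Finset (ι → ℕ) :=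
  {x ∈ S | blockIndex s x = b}

/-- The indices of the blocks of side `s` that meet `S`: the set `S` at the coarser scale. -/
def blocks (s : ℕ) (S : Finset (ι → ℕ)) : Finset (ι → ℕ) := S.image (blockIndex s)

/-- The residues mod `s` of the `j`-th coordinates of the points of `S` in the block `b`. On a
block the quotients by `s` are constant, so these encode the `j`-th coordinates themselves, in a way
that can be compared between blocks. -/
def residues (s : ℕ) (S : Finset (ι → ℕ)) (j : ι) (b : ι → ℕ) : Finset ℕ :=
  (block s S b).image fun x => x j % s

/-- The blocks of side `s` whose points have at least `k` distinct `j`-th coordinates. -/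
def wideBlocks (k s : ℕ) (S : Finset (ι → ℕ)) (j : ι) : Finset (ι → ℕ) :=
  {b ∈ blocks s S | k ≤ #(residues s S j b)}

lemma residues_subset_range (hs : 0 < s) (S : Finset (ι → ℕ)) (j : ι) (b : ι → ℕ) :
    residues s S j b ⊆ range s :=
  image_subset_iff.mpr fun x _ => mem_range.mpr (Nat.mod_lt (x j) hs)

lemma card_block_le_prod_card_residues (s : ℕ) (S : Finset (ι → ℕ)) (b : ι → ℕ) :
    #(block s S b) ≤ ∏ j, #(residues s S j b) := by
  classical
  rw [← Fintype.card_piFinset]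
  refine card_le_card_of_injOn (fun x j => x j % s) (fun x hx => ?_) fun x hx y hy hxy => ?_
  · exact Fintype.mem_piFinset.mpr fun j => mem_image_of_mem (fun x : ι → ℕ => x j % s) hx
  · have hdiv : blockIndex s x = blockIndex s y :=
      (mem_filter.mp hx).2.trans (mem_filter.mp hy).2.symm
    funext j
    exact Nat.ext_div_mod (congrFun hdiv j) (congrFun hxy j)

lemma card_block_le (k : ℕ) (hs : 0 < s) (S : Finset (ι → ℕ)) (b : ι → ℕ) :
    #(block s S b) ≤ k ^ Fintype.card ι + s ^ Fintype.card ι * #{j | k ≤ #(residues s S j b)} := by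
  have hprod := card_block_le_prod_card_residues s S b
  rcases eq_empty_or_nonempty ({j | k ≤ #(residues s S j b)} : Finset ι) with hnarrow | hwide
  · have hlt (j : ι) : #(residues s S j b) < k := by
      simpa using filter_eq_empty_iff.mp hnarrow (mem_univ j)
    calc #(block s S b) ≤ ∏ j, #(residues s S j b) := hprod
      _ ≤ k ^ Fintype.card ι := prod_le_pow_card _ _ k fun j _ => (hlt j).le
      _ ≤ _ := Nat.le_add_right _ _
  · have hle (j : ι) : #(residues s S j b) ≤ s := by
      simpa using card_le_card (residues_subset_range hs S j b)
    calc #(block s S b) ≤ ∏ j, #(residues s S j b) := hprod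
      _ ≤ s ^ Fintype.card ι := prod_le_pow_card _ _ s fun j _ => hle j
      _ ≤ s ^ Fintype.card ι * #{j | k ≤ #(residues s S j b)} :=
        Nat.le_mul_of_pos_right _ hwide.card_pos
      _ ≤ _ := Nat.le_add_left _ _

lemma card_le_card_blocks_add_card_wideBlocks (k : ℕ) (hs : 0 < s) (S : Finset (ι → ℕ)) :
    #S ≤ k ^ Fintype.card ι * #(blocks s S) +
      s ^ Fintype.card ι * ∑ j, #(wideBlocks k s S j) := by
  have hcount : ∑ b ∈ blocks s S, #{j | k ≤ #(residues s S j b)} = ∑ j, #(wideBlocks k s S j) :=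
    sum_card_bipartiteAbove_eq_sum_card_bipartiteBelow fun b j => k ≤ #(residues s S j b)
  calc #S = ∑ b ∈ blocks s S, #(block s S b) := card_eq_sum_card_image _ _
    _ ≤ ∑ b ∈ blocks s S,
          (k ^ Fintype.card ι + s ^ Fintype.card ι * #{j | k ≤ #(residues s S j b)}) :=
      sum_le_sum fun b _ => card_block_le k hs S b
    _ = _ := by
      rw [sum_add_distrib, sum_const, smul_eq_mul, mul_comm, ← mul_sum, hcount]

lemma ContainsPattern.of_blocks (h : ContainsPattern σ (blocks s S)) : ContainsPattern σ S := by
  obtain ⟨p, hp, hlt⟩ := h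
  choose x hxS hxp using fun t => mem_image.mp (hp t)
  refine ⟨x, hxS, fun j t u htu => Nat.lt_of_div_lt_div (c := s) ?_⟩
  have hidx := hlt j t u htu
  rwa [← hxp, ← hxp] at hidx

variable [DecidableEq ι]

lemma ContainsPattern.of_common_residues {j : ι} {c : ℕ} {R : Finset ℕ} (hR : k ≤ #R)
    {F : Finset (ι → ℕ)} (hF : ∀ b ∈ F, b j = c ∧ R ⊆ residues s S j b)
    (h : ContainsPattern (Subtype.restrict (· ≠ j) σ) (F.image (Subtype.restrict (· ≠ j)))) :
    ContainsPattern σ S := by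
  obtain ⟨p, hp, hlt⟩ := h
  choose b hbF hbp using fun t => mem_image.mp (hp t)
  let e := orderEmbOfCardLe R hR
  have hres (t : τ) : e (σ j t) ∈ residues s S j (b t) :=
    (hF _ (hbF t)).2 (orderEmbOfCardLe_mem R hR _)
  choose x hx hxe using fun t => mem_image.mp (hres t)
  have hxb (t : τ) (i : ι) : x t i / s = b t i := congrFun (mem_filter.mp (hx t)).2 i
  refine ⟨x, fun t => (mem_filter.mp (hx t)).1, fun i t u htu => ?_⟩
  by_cases hij : i = j
  · subst hij
    have hdiv : x t i / s = x u i / s := by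
      rw [hxb, hxb, (hF _ (hbF t)).1, (hF _ (hbF u)).1]
    rw [← Nat.div_add_mod (x t i) s, ← Nat.div_add_mod (x u i) s, hdiv, hxe, hxe]
    exact Nat.add_lt_add_left (e.strictMono htu) _
  · have hidx : p t ⟨i, hij⟩ < p u ⟨i, hij⟩ := hlt ⟨i, hij⟩ t u htu
    rw [← hbp, ← hbp] at hidx
    refine Nat.lt_of_div_lt_div (c := s) ?_
    rwa [hxb, hxb]

end Blocks

section ExtremalNumber

variable [Fintype ι] [DecidableEq ι]

/-- The grid `{0, …, n - 1}^ι`. -/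
def grid (ι : Type*) [Fintype ι] [DecidableEq ι] (n : ℕ) : Finset (ι → ℕ) :=
  Fintype.piFinset fun _ => range n

lemma mem_grid {x : ι → ℕ} : x ∈ grid ι n ↔ ∀ j, x j < n := by
  simp [grid]

lemma blocks_subset_grid (hS : S ⊆ grid ι (N * s)) : blocks s S ⊆ grid ι N :=
  image_subset_iff.mpr fun _ hx => mem_grid.mpr fun j =>
    Nat.div_lt_of_lt_mul (mul_comm N s ▸ mem_grid.mp (hS hx) j)

open scoped Classical in
/-- The maximal number of points of a subset of the grid of side `n` that does not contain the
pattern `σ`, written `ex_d(n, A)` for the pattern of the one-entries of a matrix `A`. -/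
noncomputable def extremalNumber (σ : ι → τ → Fin k) (n : ℕ) : ℕ :=
  {S ∈ (grid ι n).powerset | ¬ ContainsPattern σ S}.sup card

lemma card_le_extremalNumber (hS : S ⊆ grid ι n) (h : ¬ ContainsPattern σ S) :
    #S ≤ extremalNumber σ n :=
  le_sup (f := card) (by simp [hS, h])

lemma extremalNumber_le {B : ℕ} (h : ∀ S ⊆ grid ι n, ¬ ContainsPattern σ S → #S ≤ B) :
    extremalNumber σ n ≤ B :=
  Finset.sup_le fun S hS => by
    simp only [mem_filter, mem_powerset] at hS
    exact h S hS.1 hS.2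

lemma extremalNumber_mono (σ : ι → τ → Fin k) : Monotone (extremalNumber σ) := fun _ _ hmn =>
  extremalNumber_le fun _ hS h =>
    card_le_extremalNumber (fun _ hx => mem_grid.mpr fun j =>
      (mem_grid.mp (hS hx) j).trans_le hmn) h

lemma extremalNumber_le_pow (σ : ι → τ → Fin k) (n : ℕ) :
    extremalNumber σ n ≤ n ^ Fintype.card ι :=
  extremalNumber_le fun _ hS _ => (card_le_card hS).trans_eq (by simp [grid])

lemma extremalNumber_of_isEmpty [IsEmpty ι] (σ : ι → τ → Fin k) (n : ℕ) :
    extremalNumber σ n = 0 := by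
  refine Nat.le_zero.mp (extremalNumber_le fun S _ h => ?_)
  rw [Nat.le_zero, card_eq_zero]
  by_contra hS
  obtain ⟨x, hx⟩ := nonempty_iff_ne_empty.mpr hS
  exact h ⟨fun _ => x, fun _ => hx, fun j => isEmptyElim j⟩

lemma card_wideBlocks_fiber_le (hS : S ⊆ grid ι (N * s)) (h : ¬ ContainsPattern σ S) (j : ι)
    (c : ℕ) (R : Finset ℕ) :
    #{b ∈ wideBlocks k s S j | (b j, residues s S j b) = (c, R)} ≤
      extremalNumber (Subtype.restrict (· ≠ j) σ) N := by
  set F := {b ∈ wideBlocks k s S j | (b j, residues s S j b) = (c, R)} with hFdef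
  have hF : ∀ b ∈ F, b ∈ wideBlocks k s S j ∧ b j = c ∧ residues s S j b = R := fun b hb => by
    simpa [hFdef] using hb
  rcases F.eq_empty_or_nonempty with hempty | ⟨b₀, hb₀⟩
  · simp [hempty]
  have hR : k ≤ #R := by
    obtain ⟨hwide, -, rfl⟩ := hF b₀ hb₀
    exact (mem_filter.mp hwide).2
  have hinj : Set.InjOn (Subtype.restrict (· ≠ j)) (F : Set (ι → ℕ)) := fun b hb b' hb' hbb' => by
    funext i
    by_cases hij : i = j
    · rw [hij, (hF b hb).2.1, (hF b' hb').2.1]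
    · exact congrFun hbb' ⟨i, hij⟩
  rw [← card_image_of_injOn hinj]
  refine card_le_extremalNumber (image_subset_iff.mpr fun b hb => mem_grid.mpr fun i => ?_)
    fun hp => h (hp.of_common_residues hR fun b hb => ⟨(hF b hb).2.1, (hF b hb).2.2.ge⟩)
  exact mem_grid.mp (blocks_subset_grid hS (mem_filter.mp (hF b hb).1).1) i

lemma card_wideBlocks_le (hs : 0 < s) (hS : S ⊆ grid ι (N * s)) (h : ¬ ContainsPattern σ S)
    (j : ι) :
    #(wideBlocks k s S j) ≤ extremalNumber (Subtype.restrict (· ≠ j) σ) N * (N * 2 ^ s) := by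
  have hkeys : #(range N ×ˢ (range s).powerset) = N * 2 ^ s := by simp
  rw [← hkeys]
  refine card_le_mul_card_image_of_maps_to (f := fun b => (b j, residues s S j b))
    (fun b hb => ?_) _ fun key _ => card_wideBlocks_fiber_le hS h j key.1 key.2
  exact mk_mem_product
    (mem_range.mpr (mem_grid.mp (blocks_subset_grid hS (mem_filter.mp hb).1) j))
    (mem_powerset.mpr (residues_subset_range hs S j b))

lemma extremalNumber_mul_le (σ : ι → τ → Fin k) (hs : 0 < s) (N : ℕ) :
    extremalNumber σ (N * s) ≤ k ^ Fintype.card ι * extremalNumber σ N +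
      s ^ Fintype.card ι *
        ∑ j, extremalNumber (Subtype.restrict (· ≠ j) σ) N * (N * 2 ^ s) := by
  refine extremalNumber_le fun S hS h => ?_
  refine (card_le_card_blocks_add_card_wideBlocks k hs S).trans ?_
  gcongr with j
  · exact card_le_extremalNumber (blocks_subset_grid hS) (mt ContainsPattern.of_blocks h)
  · exact card_wideBlocks_le hs hS h j

/-- In dimension one the recursion for a single block of side `n` is already the bound, as the
pattern without its only direction occurs in every nonempty set. -/
lemma extremalNumber_le_of_unique [Unique ι] (σ : ι → τ → Fin k) (n : ℕ) :
    extremalNumber σ n ≤ k := by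
  rcases n.eq_zero_or_pos with rfl | hn
  · exact (extremalNumber_le_pow σ 0).trans (by simp)
  have hempty (j : ι) : IsEmpty {i // i ≠ j} := ⟨fun i => i.2 (Subsingleton.elim _ _)⟩
  calc extremalNumber σ n = extremalNumber σ (1 * n) := by rw [one_mul]
    _ ≤ k * extremalNumber σ 1 := by
      simpa [extremalNumber_of_isEmpty] using extremalNumber_mul_le σ hn 1
    _ ≤ k * 1 := by
      gcongr
      simpa using extremalNumber_le_pow σ 1
    _ = k := mul_one k

end ExtremalNumber

section Recursion

variable {f : ℕ → ℕ} {a D e : ℕ}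

lemma apply_pow_le_of_le_mul_add (ha : a < s ^ e)
    (hrec : ∀ N, f (N * s) ≤ a * f N + D * N ^ e) (m : ℕ) :
    f (s ^ m) ≤ (f 1 + D) * (s ^ m) ^ e := by
  induction m with
  | zero => simp
  | succ m ih =>
    calc f (s ^ (m + 1)) ≤ a * f (s ^ m) + D * (s ^ m) ^ e := by
          rw [pow_succ]
          exact hrec (s ^ m)
      _ ≤ a * ((f 1 + D) * (s ^ m) ^ e) + (f 1 + D) * (s ^ m) ^ e := by
        gcongr
        exact Nat.le_add_left D (f 1)
      _ = (f 1 + D) * (s ^ m) ^ e * (a + 1) := by ring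
      _ ≤ (f 1 + D) * (s ^ m) ^ e * s ^ e := by
        gcongr
        exact ha
      _ = (f 1 + D) * (s ^ (m + 1)) ^ e := by rw [pow_succ s m, mul_pow, mul_assoc]

lemma exists_le_mul_pow_of_le_mul_add (hf : Monotone f) (hs : 1 < s) (ha : a < s ^ e)
    (hrec : ∀ N, f (N * s) ≤ a * f N + D * N ^ e) :
    ∃ C, ∀ n, n ≠ 0 → f n ≤ C * n ^ e := by
  refine ⟨(f 1 + D) * s ^ e, fun n hn => ?_⟩
  calc f n ≤ f (s ^ (Nat.log s n + 1)) := hf (Nat.lt_pow_succ_log_self hs n).le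
    _ ≤ (f 1 + D) * (s ^ (Nat.log s n + 1)) ^ e := apply_pow_le_of_le_mul_add ha hrec _
    _ ≤ (f 1 + D) * (s * n) ^ e := by
      rw [pow_succ']
      gcongr
      exact Nat.pow_log_le_self s hn
    _ = (f 1 + D) * s ^ e * n ^ e := by rw [mul_pow, mul_assoc]

end Recursion

lemma pow_add_two_lt_add_two_sq_pow (k e : ℕ) : k ^ (e + 2) < ((k + 2) ^ 2) ^ (e + 1) :=
  calc k ^ (e + 2) < (k + 2) ^ (e + 2) := Nat.pow_lt_pow_left (by lia) (by lia)
    _ ≤ (k + 2) ^ (2 * (e + 1)) := Nat.pow_le_pow_right (by lia) (by lia)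
    _ = ((k + 2) ^ 2) ^ (e + 1) := pow_mul _ _ _

lemma exists_extremalNumber_le_mul_pow_of_restrict [Fintype ι] [DecidableEq ι] {e : ℕ}
    (hι : Fintype.card ι = e + 2) (σ : ι → τ → Fin k)
    (h : ∀ j, ∃ C, ∀ n, extremalNumber (Subtype.restrict (· ≠ j) σ) n ≤ C * n ^ e) :
    ∃ C, ∀ n, extremalNumber σ n ≤ C * n ^ (e + 1) := by
  choose c hc using h
  let s := (k + 2) ^ 2
  have hs : 1 < s := Nat.one_lt_pow two_ne_zero (by lia)
  have hrec (N : ℕ) : extremalNumber σ (N * s) ≤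
      k ^ (e + 2) * extremalNumber σ N + s ^ (e + 2) * (∑ j, c j) * 2 ^ s * N ^ (e + 1) :=
    calc extremalNumber σ (N * s)
      _ ≤ k ^ (e + 2) * extremalNumber σ N + s ^ (e + 2) *
            ∑ j, extremalNumber (Subtype.restrict (· ≠ j) σ) N * (N * 2 ^ s) :=
        hι ▸ extremalNumber_mul_le σ (zero_lt_one.trans hs) N
      _ ≤ k ^ (e + 2) * extremalNumber σ N +
            s ^ (e + 2) * ∑ j, c j * N ^ e * (N * 2 ^ s) := by
        gcongr with j
        exact hc j N
      _ = _ := by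
        rw [← sum_mul, ← sum_mul]
        ring
  obtain ⟨C, hC⟩ := exists_le_mul_pow_of_le_mul_add (extremalNumber_mono σ) hs
    (pow_add_two_lt_add_two_sq_pow k e) hrec
  refine ⟨C, fun n => ?_⟩
  rcases eq_or_ne n 0 with rfl | hn
  · exact (extremalNumber_le_pow σ 0).trans (by simp [hι])
  · exact hC n hn

theorem exists_extremalNumber_le_mul_pow [Fintype ι] [DecidableEq ι] [hne : Nonempty ι]
    (σ : ι → τ → Fin k) :
    ∃ C, ∀ n, extremalNumber σ n ≤ C * n ^ (Fintype.card ι - 1) := by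
  obtain ⟨d, hd⟩ := Nat.exists_eq_add_one.mpr (Fintype.card_pos (α := ι))
  rw [hd, Nat.add_sub_cancel]
  clear hne
  induction d generalizing ι with
  | zero =>
    obtain ⟨_⟩ := Fintype.card_eq_one_iff_nonempty_unique.mp hd
    exact ⟨k, fun n => by simpa using extremalNumber_le_of_unique σ n⟩
  | succ e ih =>
    exact exists_extremalNumber_le_mul_pow_of_restrict hd σ fun j => ih _ (by simp [hd])

section Matrices

/-- The pattern formed by the one-entries of the matrix `A`, indexed by the entries themselves. -/
def entryPattern (A : (ι → Fin k) → Bool) : ι → {i // A i = true} → Fin k := fun j t => t.1 j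

lemma IsPermMatrix.bijective_entryPattern {d : ℕ} {A : (Fin d → Fin k) → Bool}
    (hA : IsPermMatrix A) (j : Fin d) : Function.Bijective (entryPattern A j) := by
  refine ⟨fun t u htu => Subtype.ext ?_, fun v => ?_⟩
  · exact (hA.2 j (t.1 j)).unique ⟨t.2, rfl⟩ ⟨u.2, htu.symm⟩
  · obtain ⟨i, ⟨hi, hij⟩, -⟩ := hA.2 j v
    exact ⟨⟨i, hi⟩, hij⟩

variable [Fintype ι] [DecidableEq ι]

/-- The positions of the one-entries of `M`, as points with natural number coordinates. -/
def onesPoints {nn : ι → ℕ} (M : (∀ j, Fin (nn j)) → Bool) : Finset (ι → ℕ) :=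
  ({i | M i = true} : Finset (∀ j, Fin (nn j))).image fun i j => (i j : ℕ)

lemma card_onesPoints {nn : ι → ℕ} (M : (∀ j, Fin (nn j)) → Bool) : #(onesPoints M) = ones M :=
  card_image_of_injective _ fun _ _ h => funext fun j => Fin.ext (congrFun h j)

lemma onesPoints_subset_grid (M : (ι → Fin n) → Bool) : onesPoints M ⊆ grid ι n :=
  image_subset_iff.mpr fun i _ => mem_grid.mpr fun j => (i j).isLt

lemma ContainsPattern.matContains {A : (ι → Fin k) → Bool} {nn : ι → ℕ}
    {M : (∀ j, Fin (nn j)) → Bool} (hA : ∀ j, Function.Bijective (entryPattern A j))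
    (h : ContainsPattern (entryPattern A) (onesPoints M)) : MatContains M A := by
  obtain ⟨p, hp, hlt⟩ := h
  choose q hqM hqp using fun t => mem_image.mp (hp t)
  let e (j : ι) : {i // A i = true} ≃ Fin k := Equiv.ofBijective _ (hA j)
  refine ⟨fun j v => q ((e j).symm v) j, fun j v w hvw => ?_, fun i hi => ?_⟩
  · have hpattern : entryPattern A j ((e j).symm v) < entryPattern A j ((e j).symm w) := by
      simpa only [e, Equiv.ofBijective_apply_symm_apply] using hvw
    have hcoord := hlt j _ _ hpattern
    rwa [← hqp, ← hqp] at hcoord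
  · have hentry (j : ι) : (e j).symm (i j) = ⟨i, hi⟩ := (e j).symm_apply_apply ⟨i, hi⟩
    simpa only [hentry] using (mem_filter.mp (hqM ⟨i, hi⟩)).2

end Matrices

end ForbiddenPatterns

/-- **Klazar–Marcus.** For every `d ≥ 1` and every permutation d-matrix `A`
of size `k^d`, there is a constant `C` such that for every `n`, every `A`-free d-matrix of
size `n^d` has at most `C·n^(d−1)` one-entries. -/
theorem stmt_2 (d k : ℕ) (hd : 1 ≤ d) (A : (Fin d → Fin k) → Bool) (hA : IsPermMatrix A) :
    ∃ C : ℝ, 0 ≤ C ∧ ∀ n : ℕ, ∀ M : (Fin d → Fin n) → Bool,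
      ¬ MatContains M A → (ones M : ℝ) ≤ C * (n : ℝ) ^ (d - 1) := by
  have : Nonempty (Fin d) := ⟨⟨0, hd⟩⟩
  obtain ⟨C, hC⟩ := exists_extremalNumber_le_mul_pow (entryPattern A)
  refine ⟨C, C.cast_nonneg, fun n M hM => ?_⟩
  have hfree : ¬ ContainsPattern (entryPattern A) (onesPoints M) :=
    fun h => hM (h.matContains hA.bijective_entryPattern)
  have hbound : ones M ≤ C * n ^ (d - 1) :=
    calc ones M = #(onesPoints M) := (card_onesPoints M).symm
      _ ≤ extremalNumber (entryPattern A) n :=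
        card_le_extremalNumber (onesPoints_subset_grid M) hfree
      _ ≤ C * n ^ (d - 1) := by simpa only [Fintype.card_fin] using hC n
  exact_mod_cast hbound
end

section
/- Let d ≥ 2, let P be a finite poset, and let A be a permutation d-matrix of size |P|^d whose 1-entries are in a bijection β with the elements of P such that p <_P p' iff every coordinate of the position of β(p) is strictly smaller than the corresponding coordinate of the position of β(p'). Let K be a nonnegative real with ex_d(n, A) ≤ K·n^{d−1} for all positive integers n. Then for every family F of subsets of [n] that is induced P-free and every permutation d-partition Q of [n], the number of sets F ∈ F that are prefix unions of Q is at most K·((n + d − 1)/(d − 1))^{d−1}. -/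
/-- The extremal number: the maximum number of 1-entries of an `A`-free
hypermatrix of size `nn`. -/
noncomputable def exd {ι : Type*} [Fintype ι] [DecidableEq ι] (nn : ι → ℕ) {kk : ι → ℕ}
    (A : (∀ j, Fin (kk j)) → Bool) : ℕ :=
  sSup {m : ℕ | ∃ M : (∀ j, Fin (nn j)) → Bool, ¬ MatContains M A ∧ ones M = m}

/-- The family `F` of subsets of `[n]` contains the poset `P` as an induced subposet. -/
def ContainsInduced (P : Type*) [PartialOrder P] {n : ℕ}
    (F : Finset (Finset (Fin n))) : Prop :=
  ∃ α : P → Finset (Fin n), Function.Injective α ∧ (∀ p, α p ∈ F) ∧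
    ∀ x y : P, x < y ↔ α x ⊂ α y

/-- A permutation d-partition of `[n]`: an ordered partition of a permutation of the
elements of `[n]` into `d` (possibly empty) sequences. -/
def IsPermPartition {n d : ℕ} (Q : Fin d → List (Fin n)) : Prop :=
  (List.ofFn Q).flatten.Perm (List.finRange n)

/-- `F` is a prefix union of the permutation d-partition `Q`. -/
def IsPrefixUnion {n d : ℕ} (Q : Fin d → List (Fin n)) (F : Finset (Fin n)) : Prop :=
  ∃ t : Fin d → ℕ, (∀ j, t j ≤ (Q j).length) ∧
    F = Finset.univ.biUnion fun j => ((Q j).take (t j)).toFinset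

/-!
The tuples `i` with `i j ≤ |Q j|` index a hypermatrix with sides `|Q j| + 1`; put a `1` wherever the
corresponding prefix union belongs to `F`. Inclusion of prefix unions is the coordinatewise order on
tuples, so if `P` embeds as an ordered set into the 1-entries of `A`, then a copy of `A` in this
matrix is an induced copy of `P` in `F`. The 1-entries of a permutation matrix that represents `P`
form such an embedded copy, because two distinct ones differ in every coordinate.

It remains to pass from cubes to boxes. In every direction of a box choose a random cyclic interval
whose length is the smallest side `m`. An `A`-free matrix `M` restricts to an `A`-free cube of side
`m`, and each of its ones survives with probability `∏ j, m / nn j`; hence `|M|` is at most `K`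
times the product of all sides but the smallest. AM-GM bounds this product in terms of the sum of
the sides, which is `n + d` for the matrix of prefix unions.
-/

open Finset

section PrefixUnion

variable {ι α : Type*} [Fintype ι] [DecidableEq α]

/-- The union of the first `t j` elements of each of the sequences `Q j`; it is written
`Q[t₁ + 1, …, t_d + 1)` in the paper, which starts indices at `1`. -/
def prefixUnion (Q : ι → List α) (t : ι → ℕ) : Finset α :=
  univ.biUnion fun j => ((Q j).take (t j)).toFinset

lemma mem_prefixUnion {Q : ι → List α} {t : ι → ℕ} {x : α} :
    x ∈ prefixUnion Q t ↔ ∃ j, x ∈ (Q j).take (t j) := by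
  simp [prefixUnion]

lemma prefixUnion_mono (Q : ι → List α) : Monotone (prefixUnion Q) := by
  intro t t' h x hx
  obtain ⟨j, hj⟩ := mem_prefixUnion.1 hx
  exact mem_prefixUnion.2 ⟨j, (List.take_prefix_take_left (h j)).subset hj⟩

lemma getElem_mem_prefixUnion_iff {Q : ι → List α} (hnodup : ∀ j, (Q j).Nodup)
    (hdisj : Pairwise (Function.onFun List.Disjoint Q)) {t : ι → ℕ} {j : ι} {a : ℕ}
    (ha : a < (Q j).length) : (Q j)[a] ∈ prefixUnion Q t ↔ a < t j := by
  rw [mem_prefixUnion]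
  constructor
  · rintro ⟨l, hl⟩
    obtain rfl : l = j := by
      by_contra hlj
      exact hdisj hlj (List.mem_of_mem_take hl) (List.getElem_mem ha)
    obtain ⟨b, hb, hba⟩ := List.mem_take_iff_getElem.1 hl
    have : b = a := (hnodup l).getElem_inj_iff.1 hba
    omega
  · exact fun h => ⟨j, List.mem_take_iff_getElem.2 ⟨a, by omega, rfl⟩⟩

lemma prefixUnion_subset_prefixUnion_iff {Q : ι → List α} (hnodup : ∀ j, (Q j).Nodup)
    (hdisj : Pairwise (Function.onFun List.Disjoint Q)) {t t' : ι → ℕ}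
    (ht : ∀ j, t j ≤ (Q j).length) : prefixUnion Q t ⊆ prefixUnion Q t' ↔ t ≤ t' := by
  refine ⟨fun h j => ?_, fun h => prefixUnion_mono Q h⟩
  by_contra! hlt
  have hlen : t' j < (Q j).length := hlt.trans_le (ht j)
  have hmem : (Q j)[t' j] ∈ prefixUnion Q t :=
    (getElem_mem_prefixUnion_iff hnodup hdisj hlen).2 hlt
  exact lt_irrefl _ ((getElem_mem_prefixUnion_iff hnodup hdisj hlen).1 (h hmem))

/-- Prefix unions of disjoint sequences without repetition, indexed by the box of all prefix
lengths, as an order embedding. -/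
def prefixUnionEmbedding (Q : ι → List α) (hnodup : ∀ j, (Q j).Nodup)
    (hdisj : Pairwise (Function.onFun List.Disjoint Q)) :
    (∀ j, Fin ((Q j).length + 1)) ↪o Finset α :=
  OrderEmbedding.ofMapLEIff (fun i => prefixUnion Q fun j => i j) fun i _ =>
    prefixUnion_subset_prefixUnion_iff hnodup hdisj fun j => Nat.le_of_lt_succ (i j).2

/-- The hypermatrix that marks the prefix unions of `Q` belonging to `F`. -/
def prefixMatrix (Q : ι → List α) (F : Finset (Finset α)) :
    (∀ j, Fin ((Q j).length + 1)) → Bool :=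
  fun i => decide (prefixUnion Q (fun j => i j) ∈ F)

end PrefixUnion

section PermPartition

variable {n d : ℕ} {Q : Fin d → List (Fin n)}

lemma IsPermPartition.nodup_flatten (hQ : IsPermPartition Q) : (List.ofFn Q).flatten.Nodup :=
  hQ.nodup_iff.2 (List.nodup_finRange n)

lemma IsPermPartition.nodup (hQ : IsPermPartition Q) (j : Fin d) : (Q j).Nodup :=
  (List.nodup_flatten.1 hQ.nodup_flatten).1 _ (by simp)

lemma IsPermPartition.pairwise_disjoint (hQ : IsPermPartition Q) :
    Pairwise (Function.onFun List.Disjoint Q) := by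
  have h := List.pairwise_ofFn.1 (List.nodup_flatten.1 hQ.nodup_flatten).2
  intro i j hij
  exact hij.lt_or_gt.elim (fun hlt => h hlt) fun hgt => (h hgt).symm

lemma IsPermPartition.sum_length (hQ : IsPermPartition Q) : ∑ j, (Q j).length = n := by
  simpa [List.length_flatten, List.map_ofFn, List.sum_ofFn] using hQ.length_eq

lemma ncard_prefixUnions_le_ones (Q : Fin d → List (Fin n)) (F : Finset (Finset (Fin n))) :
    {S | S ∈ F ∧ IsPrefixUnion Q S}.ncard ≤ ones (prefixMatrix Q F) := by
  have hsub : {S | S ∈ F ∧ IsPrefixUnion Q S} ⊆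
      ((univ.filter fun i => prefixMatrix Q F i = true).image
        fun i => prefixUnion Q fun j => i j : Finset (Finset (Fin n))) := by
    rintro _ ⟨hS, t, ht, rfl⟩
    rw [coe_image]
    exact ⟨fun j => ⟨t j, Nat.lt_succ_of_le (ht j)⟩,
      mem_coe.2 (mem_filter.2 ⟨mem_univ _, decide_eq_true hS⟩), rfl⟩
  calc {S | S ∈ F ∧ IsPrefixUnion Q S}.ncard
      ≤ _ := Set.ncard_le_ncard hsub (finite_toSet _)
    _ ≤ _ := (Set.ncard_coe_finset _).trans_le card_image_le

end PermPartition

section Containment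

variable {ι : Type*} {kk nn mm : ι → ℕ} {A : (∀ j, Fin (kk j)) → Bool}
  {M : (∀ j, Fin (nn j)) → Bool}

lemma MatContains.exists_orderEmbedding (h : MatContains M A) :
    ∃ e : (∀ j, Fin (kk j)) ↪o (∀ j, Fin (nn j)), ∀ i, A i = true → M (e i) = true := by
  obtain ⟨f, hf, hM⟩ := h
  exact ⟨OrderEmbedding.ofMapLEIff (fun i j => f j (i j)) fun i i' =>
    forall_congr' fun j => (hf j).le_iff_le, hM⟩

lemma MatContains.of_submatrix {g : ∀ j, Fin (mm j) → Fin (nn j)} (hg : ∀ j, StrictMono (g j))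
    (h : MatContains (fun i => M fun j => g j (i j)) A) : MatContains M A := by
  obtain ⟨f, hf, hM⟩ := h
  exact ⟨fun j => g j ∘ f j, fun j => (hg j).comp (hf j), hM⟩

lemma containsInduced_of_orderEmbedding {P : Type*} [PartialOrder P] {n : ℕ}
    {F : Finset (Finset (Fin n))} (e : P ↪o Finset (Fin n)) (he : ∀ p, e p ∈ F) :
    ContainsInduced P F :=
  ⟨e, e.injective, he, fun _ _ => e.lt_iff_lt.symm⟩

lemma not_matContains_prefixMatrix {P : Type*} [PartialOrder P] {n d : ℕ} {k : Fin d → ℕ}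
    {A : (∀ j, Fin (k j)) → Bool} (β : P ↪o (∀ j, Fin (k j))) (hβ : ∀ p, A (β p) = true)
    {F : Finset (Finset (Fin n))} (hF : ¬ ContainsInduced P F)
    {Q : Fin d → List (Fin n)} (hQ : IsPermPartition Q) :
    ¬ MatContains (prefixMatrix Q F) A := by
  intro h
  obtain ⟨e, he⟩ := h.exists_orderEmbedding
  refine hF (containsInduced_of_orderEmbedding
    ((β.trans e).trans (prefixUnionEmbedding Q hQ.nodup hQ.pairwise_disjoint)) fun p => ?_)
  exact of_decide_eq_true (he (β p) (hβ p))

end Containment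

section PermMatrix

variable {d k : ℕ} {A : (Fin d → Fin k) → Bool}

lemma IsPermMatrix.strongLT_of_lt (hA : IsPermMatrix A) {a b : Fin d → Fin k}
    (ha : A a = true) (hb : A b = true) (h : a < b) : StrongLT a b := fun j =>
  (h.le j).lt_of_ne fun hj => h.ne ((hA.2 j (b j)).unique ⟨ha, hj⟩ ⟨hb, rfl⟩)

lemma IsPermMatrix.le_iff_le_of_lt_iff_strongLT (hA : IsPermMatrix A) {P : Type*} [PartialOrder P]
    {β : P → Fin d → Fin k} (hβinj : Function.Injective β) (hβ : ∀ p, A (β p) = true)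
    (hβord : ∀ p p', p < p' ↔ StrongLT (β p) (β p')) (p p' : P) : β p ≤ β p' ↔ p ≤ p' := by
  constructor
  · intro h
    rcases h.eq_or_lt with heq | hlt
    · exact (hβinj heq).le
    · exact ((hβord p p').2 (hA.strongLT_of_lt (hβ p) (hβ p') hlt)).le
  · intro h
    rcases h.eq_or_lt with rfl | hlt
    · exact le_rfl
    · exact ((hβord p p').1 hlt).le

end PermMatrix

lemma sum_card_filter_sub_mem {G : Type*} [AddGroup G] [Fintype G] [DecidableEq G]
    (S B : Finset G) : ∑ s, #{x ∈ S | x - s ∈ B} = #S * #B :=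
  calc ∑ s, #{x ∈ S | x - s ∈ B}
      = ∑ x ∈ S, #{s | x - s ∈ B} :=
        (sum_card_bipartiteAbove_eq_sum_card_bipartiteBelow fun x s => x - s ∈ B).symm
    _ = ∑ _x ∈ S, #B := sum_congr rfl fun x _ => card_equiv (Equiv.subLeft x) (by simp)
    _ = #S * #B := by simp

/-- The cyclic interval `{s, s + 1, …, s + m - 1}` of `ℤ/n`. -/
def cyclicInterval {n : ℕ} (m : ℕ) (s : Fin n) : Finset (Fin n) :=
  univ.filter fun x => ((x - s : Fin n) : ℕ) < m

lemma card_cyclicInterval {n : ℕ} [NeZero n] (m : ℕ) (s : Fin n) :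
    #(cyclicInterval m s) = min n m := by
  rw [← Fin.card_filter_val_lt]
  exact card_equiv (Equiv.subRight s) fun _ => by simp [cyclicInterval]

section Averaging

variable {ι : Type*} [Fintype ι] [DecidableEq ι] {kk nn mm : ι → ℕ}
  {A : (∀ j, Fin (kk j)) → Bool} {M : (∀ j, Fin (nn j)) → Bool}

lemma ones_le_exd (hM : ¬ MatContains M A) : ones M ≤ exd nn A := by
  refine le_csSup ⟨Fintype.card (∀ j, Fin (nn j)), ?_⟩ ⟨M, hM, rfl⟩
  rintro _ ⟨M', -, rfl⟩
  exact card_le_univ _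

lemma card_ones_inter_box_le_exd (hM : ¬ MatContains M A) (S : ∀ j, Finset (Fin (nn j))) :
    #{i | M i = true ∧ ∀ j, i j ∈ S j} ≤ exd (fun j => #(S j)) A := by
  let g : ∀ j, Fin #(S j) ↪o Fin (nn j) := fun j => (S j).orderEmbOfFin rfl
  let N : (∀ j, Fin #(S j)) → Bool := fun i => M fun j => g j (i j)
  have hN : ¬ MatContains N A := fun h => hM (h.of_submatrix fun j => (g j).strictMono)
  have hsub : ({i | M i = true ∧ ∀ j, i j ∈ S j} : Finset _) ⊆
      (univ.filter fun i => N i = true).image fun i j => g j (i j) := by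
    intro x hx
    obtain ⟨hMx, hxS⟩ := (mem_filter.1 hx).2
    have hrange : ∀ j, ∃ y, g j y = x j := fun j => by
      rw [← Set.mem_range, range_orderEmbOfFin]
      exact hxS j
    choose y hy using hrange
    exact mem_image.2 ⟨y, mem_filter.2 ⟨mem_univ y, by simpa only [N, hy] using hMx⟩, funext hy⟩
  calc _ ≤ ones N := (card_le_card hsub).trans card_image_le
    _ ≤ _ := ones_le_exd hN

/-- Average the number of ones of `M` over all translates of a box of shape `mm` in the torus
`∏ j, ℤ/nn j`. -/
lemma ones_mul_prod_le_prod_mul_exd [∀ j, NeZero (nn j)] (hM : ¬ MatContains M A)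
    (hmm : ∀ j, mm j ≤ nn j) : ones M * ∏ j, mm j ≤ (∏ j, nn j) * exd mm A := by
  let B : Finset (∀ j, Fin (nn j)) := Fintype.piFinset fun j => cyclicInterval (mm j) 0
  have hcard (s : ∀ j, Fin (nn j)) : (fun j => #(cyclicInterval (mm j) (s j))) = mm :=
    funext fun j => (card_cyclicInterval _ _).trans (min_eq_right (hmm j))
  have hB : #B = ∏ j, mm j := by
    rw [Fintype.card_piFinset]
    exact congrArg (fun f : ι → ℕ => ∏ j, f j) (hcard 0)
  calc ones M * ∏ j, mm j
      = ∑ s, #{x ∈ univ.filter fun i => M i = true | x - s ∈ B} := by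
        rw [sum_card_filter_sub_mem, hB, ones]
    _ = ∑ s : ∀ j, Fin (nn j), #{x | M x = true ∧ ∀ j, x j ∈ cyclicInterval (mm j) (s j)} := by
        simp [B, cyclicInterval, filter_filter]
    _ ≤ ∑ _s : ∀ j, Fin (nn j), exd mm A := sum_le_sum fun s _ =>
        (card_ones_inter_box_le_exd hM _).trans_eq (by rw [hcard s])
    _ = (∏ j, nn j) * exd mm A := by simp

lemma ones_le_mul_prod_erase [∀ j, NeZero (nn j)] (hM : ¬ MatContains M A) {j₀ : ι}
    (hj₀ : ∀ j, nn j₀ ≤ nn j) {K : ℝ}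
    (hex : (exd (fun _ => nn j₀) A : ℝ) ≤ K * (nn j₀ : ℝ) ^ (Fintype.card ι - 1)) :
    (ones M : ℝ) ≤ K * ∏ j ∈ univ.erase j₀, (nn j : ℝ) := by
  have hpos : (0 : ℝ) < (nn j₀ : ℝ) ^ Fintype.card ι :=
    pow_pos (Nat.cast_pos.2 (NeZero.pos _)) _
  refine le_of_mul_le_mul_right ?_ hpos
  calc (ones M : ℝ) * (nn j₀ : ℝ) ^ Fintype.card ι
      ≤ (∏ j, (nn j : ℝ)) * exd (fun _ => nn j₀) A := by
        exact_mod_cast by simpa using ones_mul_prod_le_prod_mul_exd hM hj₀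
    _ ≤ (∏ j, (nn j : ℝ)) * (K * (nn j₀ : ℝ) ^ (Fintype.card ι - 1)) := by gcongr
    _ = K * (∏ j ∈ univ.erase j₀, (nn j : ℝ)) * (nn j₀ : ℝ) ^ Fintype.card ι := by
        rw [← mul_prod_erase univ (fun j => (nn j : ℝ)) (mem_univ j₀),
          ← mul_pow_sub_one (Fintype.card_pos_iff.2 ⟨j₀⟩).ne' (nn j₀ : ℝ)]
        ring

end Averaging

lemma prod_le_mean_pow_card {ι : Type*} (s : Finset ι) {z : ι → ℝ} (hz : ∀ i ∈ s, 0 ≤ z i) :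
    ∏ i ∈ s, z i ≤ ((∑ i ∈ s, z i) / #s) ^ #s := by
  obtain rfl | hs := s.eq_empty_or_nonempty
  · simp
  have hprod : 0 ≤ ∏ i ∈ s, z i := prod_nonneg hz
  have hamgm : (∏ i ∈ s, z i) ^ (#s : ℝ)⁻¹ ≤ (∑ i ∈ s, z i) / #s := by
    simpa using Real.geom_mean_le_arith_mean s (fun _ => 1) z (fun _ _ => zero_le_one)
      (by simpa using hs) hz
  calc ∏ i ∈ s, z i = ((∏ i ∈ s, z i) ^ (#s : ℝ)⁻¹) ^ #s :=
        (Real.rpow_inv_natCast_pow hprod hs.card_ne_zero).symm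
    _ ≤ _ := pow_le_pow_left₀ (Real.rpow_nonneg hprod _) hamgm _

lemma ones_le_mul_mean_pow {ι : Type*} [Fintype ι] [DecidableEq ι] [Nonempty ι] {kk nn : ι → ℕ}
    [∀ j, NeZero (nn j)] {A : (∀ j, Fin (kk j)) → Bool} {M : (∀ j, Fin (nn j)) → Bool}
    (hM : ¬ MatContains M A) {K : ℝ}
    (hex : ∀ m : ℕ, 0 < m → (exd (fun _ => m) A : ℝ) ≤ K * (m : ℝ) ^ (Fintype.card ι - 1)) :
    (ones M : ℝ) ≤
      K * (((∑ j, (nn j : ℝ)) - 1) / ((Fintype.card ι : ℝ) - 1)) ^ (Fintype.card ι - 1) := by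
  have hK : 0 ≤ K := by simpa using (Nat.cast_nonneg _).trans (hex 1 one_pos)
  obtain ⟨j₀, hj₀⟩ := Finite.exists_min nn
  have hcard : #(univ.erase j₀) = Fintype.card ι - 1 := card_erase_of_mem (mem_univ j₀)
  have hmean : ∏ j ∈ univ.erase j₀, (nn j : ℝ) ≤
      ((∑ j ∈ univ.erase j₀, (nn j : ℝ)) / ((Fintype.card ι : ℝ) - 1)) ^ (Fintype.card ι - 1) := by
    have h := prod_le_mean_pow_card (univ.erase j₀) fun j _ => (nn j).cast_nonneg (α := ℝ)
    rwa [hcard, Nat.cast_pred Fintype.card_pos] at h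
  have hsum : ∑ j ∈ univ.erase j₀, (nn j : ℝ) ≤ (∑ j, (nn j : ℝ)) - 1 := by
    have hone : (1 : ℝ) ≤ nn j₀ := Nat.one_le_cast.2 NeZero.one_le
    rw [← add_sum_erase univ (fun j => (nn j : ℝ)) (mem_univ j₀)]
    linarith
  have hden : (0 : ℝ) ≤ (Fintype.card ι : ℝ) - 1 :=
    sub_nonneg.2 (Nat.one_le_cast.2 Fintype.card_pos)
  calc (ones M : ℝ)
      ≤ K * ∏ j ∈ univ.erase j₀, (nn j : ℝ) :=
        ones_le_mul_prod_erase hM hj₀ (hex _ (NeZero.pos _))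
    _ ≤ K * ((∑ j ∈ univ.erase j₀, (nn j : ℝ)) /
          ((Fintype.card ι : ℝ) - 1)) ^ (Fintype.card ι - 1) := by gcongr
    _ ≤ _ := by gcongr

theorem stmt_7_general {d : ℕ} (hd : 2 ≤ d) {P : Type*} [PartialOrder P] {k : Fin d → ℕ}
    {A : (∀ j, Fin (k j)) → Bool} (β : P ↪o (∀ j, Fin (k j))) (hβ : ∀ p, A (β p) = true) {K : ℝ}
    (hex : ∀ m : ℕ, 0 < m → (exd (fun _ => m) A : ℝ) ≤ K * (m : ℝ) ^ (d - 1))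
    {n : ℕ} {F : Finset (Finset (Fin n))} (hF : ¬ ContainsInduced P F)
    {Q : Fin d → List (Fin n)} (hQ : IsPermPartition Q) :
    ({S | S ∈ F ∧ IsPrefixUnion Q S}.ncard : ℝ) ≤
      K * (((n : ℝ) + (d : ℝ) - 1) / ((d : ℝ) - 1)) ^ (d - 1) := by
  have : Nonempty (Fin d) := ⟨⟨0, by omega⟩⟩
  have hsides : ∑ j, (((Q j).length + 1 : ℕ) : ℝ) = n + d := by
    rw [← Nat.cast_sum, sum_add_distrib, hQ.sum_length]
    simp
  calc ({S | S ∈ F ∧ IsPrefixUnion Q S}.ncard : ℝ)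
      ≤ ones (prefixMatrix Q F) := Nat.cast_le.2 (ncard_prefixUnions_le_ones Q F)
    _ ≤ _ := by
        simpa only [hsides, Fintype.card_fin] using
          ones_le_mul_mean_pow (not_matContains_prefixMatrix β hβ hF hQ)
            (by simpa only [Fintype.card_fin] using hex)

/-- Let `d ≥ 2`, `P` a finite poset, `A` a permutation d-matrix of size
`|P|^d` whose 1-entries are in bijection `β` with the elements of `P` as in
Observation (poset2matrix), and `K ≥ 0` with `ex_d(n,A) ≤ K·n^(d−1)` for all positive `n`.
Then for every induced `P`-free family `F` of subsets of `[n]` and every permutation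
d-partition `Q` of `[n]`, the number of members of `F` that are prefix unions of `Q` is at
most `K·((n+d−1)/(d−1))^(d−1)`. -/
theorem stmt_7 (d : ℕ) (hd : 2 ≤ d) (P : Type) [PartialOrder P] [Fintype P]
    (A : (Fin d → Fin (Fintype.card P)) → Bool) (hA : IsPermMatrix A)
    (β : P → (Fin d → Fin (Fintype.card P))) (hβinj : Function.Injective β)
    (hβbij : ∀ i, A i = true ↔ ∃ p, β p = i)
    (hβord : ∀ p p' : P, p < p' ↔ ∀ j, β p j < β p' j)
    (K : ℝ) (hK : 0 ≤ K)
    (hex : ∀ m : ℕ, 0 < m → (exd (fun _ : Fin d => m) A : ℝ) ≤ K * (m : ℝ) ^ (d - 1))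
    (n : ℕ) (F : Finset (Finset (Fin n))) (hF : ¬ ContainsInduced P F)
    (Q : Fin d → List (Fin n)) (hQ : IsPermPartition Q) :
    ({S | S ∈ F ∧ IsPrefixUnion Q S}.ncard : ℝ) ≤
      K * (((n : ℝ) + (d : ℝ) - 1) / ((d : ℝ) - 1)) ^ (d - 1) := by
  have hβ (p : P) : A (β p) = true := (hβbij _).2 ⟨p, rfl⟩
  exact stmt_7_general hd (.ofMapLEIff β (hA.le_iff_le_of_lt_iff_strongLT hβinj hβ hβord))
    hβ hex hF hQ
end
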